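/- Let s > 1 + 1/p with 1 < p < ∞, Ω = ℝ × [-1,1], and let φ ∈ W^{s,p}(Ω). Let y_* : ℝ → [-1,1] be measurable and B ⊂ ℝ measurable such that ∂_y φ(x, y_*(x)) = 0 for a.e. x ∈ B. Then there exists C = C(s,p) such that for every v ∈ H^1(Ω), ∫_B ∫_{-1}^1 |v(x,y)|² · |∂_y φ(x,y)| / |y - y_*(x)| dy dx ≤ C ‖φ‖_{W^{s,p}(Ω)} ‖v‖_{H^1(Ω)}². -/

import Mathlib

open MeasureTheory Real Set ENNReal

/-- The infinite channel `Ω = ℝ × [-1,1]`. -/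
def channel : Set (ℝ × ℝ) := Set.univ ×ˢ Set.Icc (-1 : ℝ) 1

/-- 2D Gagliardo seminorm of order `θ`, exponent `p`, applied to the `m`-th derivative. -/
noncomputable def gag2 (θ p : ℝ) (S : Set (ℝ × ℝ)) (f : ℝ × ℝ → ℝ) (m : ℕ) : ℝ≥0∞ :=
  (∫⁻ z in S, ∫⁻ z' in S,
      ENNReal.ofReal (‖iteratedFDeriv ℝ m f z - iteratedFDeriv ℝ m f z'‖ ^ p /
        ‖z - z'‖ ^ (2 + θ * p))) ^ (1 / p)

/-- The `W^{s,p}` (Slobodeckij) norm of a 2D function on the set `S`. -/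
noncomputable def sob2 (s p : ℝ) (S : Set (ℝ × ℝ)) (f : ℝ × ℝ → ℝ) : ℝ≥0∞ :=
  (∑ j ∈ Finset.range (⌊s⌋₊ + 1),
      eLpNorm (fun z => ‖iteratedFDeriv ℝ j f z‖) (ENNReal.ofReal p) (volume.restrict S))
    + (if s = ⌊s⌋₊ then 0 else gag2 (s - ⌊s⌋₊) p S f ⌊s⌋₊)

/-! Since `s - 1 > 1 / p`, the slices of `∂_y φ` are Hölder continuous of some exponent `α > 0`, by
a Morrey inequality in `y` whose constant lies in `L^p_x`. For `s < 2` it is obtained by telescoping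
along dyadic intervals: averaging over squares resting on the slice, the inner Gagliardo integral
controls differences of `∂_y φ` by a Hajłasz gradient. As `∂_y φ` vanishes at `y_*(x)`, the weight
is then at most a multiple of `|y - y_*(x)| ^ (α - 1)`, which lies in some `L^{m'}_y` with `m' > 1`.
It remains to bound `|v|²` in `L^{p'}_x L^m_y`, which follows from `L^∞_x L^m_y` and `L^1_x L^m_y`.
Both come from the line-by-line inequality of Gagliardo and Nirenberg applied to powers of `v`. -/

section OneDimensional

variable {E : Type*} [NormedAddCommGroup E] [NormedSpace ℝ E] [CompleteSpace E] {u : ℝ → E}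

lemma enorm_sub_le_lintegral_enorm_deriv (hu : Differentiable ℝ u) (a b : ℝ) :
    ‖u b - u a‖ₑ ≤ ∫⁻ r in uIcc a b, ‖deriv u r‖ₑ := by
  by_cases htop : ∫⁻ r in uIcc a b, ‖deriv u r‖ₑ = ⊤
  · simp only [htop, le_top]
  have hint : IntegrableOn (deriv u) (uIcc a b) :=
    ⟨(stronglyMeasurable_deriv u).aestronglyMeasurable, lt_top_iff_ne_top.2 htop⟩
  have hii : IntervalIntegrable (deriv u) volume a b :=
    intervalIntegrable_iff.2 (hint.mono_set uIoc_subset_uIcc)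
  rw [← intervalIntegral.integral_deriv_eq_sub (fun x _ => hu x) hii,
    ← ofReal_norm, intervalIntegral.norm_intervalIntegral_eq, ofReal_norm]
  exact (enorm_integral_le_lintegral_enorm _).trans (lintegral_mono_set uIoc_subset_uIcc)

lemma enorm_le_lintegral_enorm_add_enorm_deriv (hu : Differentiable ℝ u) {a b t : ℝ}
    (hab : a + 1 ≤ b) (ht : t ∈ Icc a b) :
    ‖u t‖ₑ ≤ ∫⁻ r in Icc a b, (‖u r‖ₑ + ‖deriv u r‖ₑ) := by
  have hvol : 1 ≤ volume (Icc a b) := by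
    rw [Real.volume_Icc]
    exact ENNReal.one_le_ofReal.2 (by linarith)
  have hum : Measurable fun r => ‖u r‖ₑ := hu.continuous.enorm.measurable
  obtain ⟨r, hr, hur⟩ := exists_le_setLAverage (μ := volume) (one_pos.trans_le hvol).ne'
    measure_Icc_lt_top.ne hum.aemeasurable
  calc ‖u t‖ₑ = ‖u r + (u t - u r)‖ₑ := by rw [add_sub_cancel]
    _ ≤ ‖u r‖ₑ + ‖u t - u r‖ₑ := enorm_add_le _ _
    _ ≤ (∫⁻ r in Icc a b, ‖u r‖ₑ) + ∫⁻ r in Icc a b, ‖deriv u r‖ₑ := by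
        gcongr
        · rw [setLAverage_eq] at hur
          exact hur.trans (ENNReal.div_le_of_le_mul (le_mul_of_one_le_right' hvol))
        · exact (enorm_sub_le_lintegral_enorm_deriv hu r t).trans
            (lintegral_mono_set (uIcc_subset_Icc hr ht))
    _ = ∫⁻ r in Icc a b, (‖u r‖ₑ + ‖deriv u r‖ₑ) := (lintegral_add_left hum _).symm

lemma enorm_sub_le_rpow_mul_lintegral_enorm_deriv (hu : Differentiable ℝ u) {p : ℝ} (hp : 1 < p)
    (a b : ℝ) :
    ‖u b - u a‖ₑ ≤ ENNReal.ofReal (|b - a| ^ (1 - 1 / p)) *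
      (∫⁻ r in uIcc a b, ‖deriv u r‖ₑ ^ p) ^ (1 / p) := by
  have hpq := Real.HolderConjugate.conjExponent hp
  have hexp : 1 / p.conjExponent = 1 - 1 / p := by
    rw [one_div, one_div, ← hpq.inv_add_inv_eq_one, add_sub_cancel_left]
  have hHolder := ENNReal.lintegral_mul_le_Lp_mul_Lq (volume.restrict (uIcc a b)) hpq
    (stronglyMeasurable_deriv u).enorm.aemeasurable (aemeasurable_const (b := (1 : ℝ≥0∞)))
  simp only [Pi.mul_apply, mul_one, ENNReal.one_rpow, lintegral_const, one_mul,
    Measure.restrict_apply_univ, Real.volume_interval, hexp] at hHolder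
  rw [← ENNReal.ofReal_rpow_of_nonneg (abs_nonneg _) (hexp ▸ hpq.symm.one_div_nonneg), mul_comm]
  exact (enorm_sub_le_lintegral_enorm_deriv hu a b).trans hHolder

end OneDimensional

lemma volume_restrict_channel :
    (volume.restrict channel : Measure (ℝ × ℝ)) =
      (volume : Measure ℝ).prod (volume.restrict (Icc (-1 : ℝ) 1)) := by
  rw [channel, Measure.volume_eq_prod, ← Measure.prod_restrict, Measure.restrict_univ]

lemma lintegral_channel {F : ℝ × ℝ → ℝ≥0∞} (hF : Measurable F) :
    ∫⁻ z in channel, F z = ∫⁻ x, ∫⁻ y in Icc (-1 : ℝ) 1, F (x, y) := by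
  rw [volume_restrict_channel, lintegral_prod _ hF.aemeasurable]

lemma lintegral_channel_symm {F : ℝ × ℝ → ℝ≥0∞} (hF : Measurable F) :
    ∫⁻ z in channel, F z = ∫⁻ y in Icc (-1 : ℝ) 1, ∫⁻ x, F (x, y) := by
  rw [volume_restrict_channel, lintegral_prod_symm _ hF.aemeasurable]

lemma lintegral_channel_marginal_mul_marginal {F : ℝ × ℝ → ℝ≥0∞} (hF : Measurable F) :
    ∫⁻ z in channel, (∫⁻ r in Icc (-1 : ℝ) 1, F (z.1, r)) * ∫⁻ r, F (r, z.2) =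
      (∫⁻ z in channel, F z) ^ 2 := by
  rw [volume_restrict_channel, lintegral_prod_mul hF.lintegral_prod_right'.aemeasurable
    hF.lintegral_prod_left'.aemeasurable, ← volume_restrict_channel, ← lintegral_channel hF,
    ← lintegral_channel_symm hF, sq]

section SobolevDensity

variable {E : Type*} [NormedAddCommGroup E] [NormedSpace ℝ E]

/-- The integrand of the `W^{1,1}` norm of `u`. -/
noncomputable def sobolevDensity (u : ℝ × ℝ → E) (z : ℝ × ℝ) : ℝ≥0∞ :=
  ‖u z‖ₑ + ‖fderiv ℝ u z‖ₑ

lemma hasDerivAt_prodMk_right (x t : ℝ) : HasDerivAt (fun r : ℝ => (x, r)) (0, 1) t :=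
  (hasDerivAt_const t x).prodMk (hasDerivAt_id t)

lemma hasDerivAt_prodMk_left (y t : ℝ) : HasDerivAt (fun r : ℝ => (r, y)) (1, 0) t :=
  (hasDerivAt_id t).prodMk (hasDerivAt_const t y)

lemma enorm_add_enorm_deriv_comp_le_sobolevDensity {u : ℝ × ℝ → E} (hu : Differentiable ℝ u)
    {ℓ : ℝ → ℝ × ℝ} {e : ℝ × ℝ} (he : ‖e‖ₑ ≤ 1) {t : ℝ} (hℓ : HasDerivAt ℓ e t) :
    ‖u (ℓ t)‖ₑ + ‖deriv (u ∘ ℓ) t‖ₑ ≤ sobolevDensity u (ℓ t) := by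
  rw [((hu (ℓ t)).hasFDerivAt.comp_hasDerivAt t hℓ).deriv, sobolevDensity]
  gcongr
  exact ((fderiv ℝ u (ℓ t)).le_opENorm e).trans (mul_le_of_le_one_right' he)

variable [CompleteSpace E] {u : ℝ × ℝ → E}

lemma measurable_sobolevDensity (hu : Differentiable ℝ u) : Measurable (sobolevDensity u) :=
  hu.continuous.enorm.measurable.add (measurable_fderiv ℝ u).enorm

lemma enorm_le_lintegral_sobolevDensity_snd (hu : Differentiable ℝ u) (x : ℝ) {y : ℝ}
    (hy : y ∈ Icc (-1 : ℝ) 1) :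
    ‖u (x, y)‖ₑ ≤ ∫⁻ r in Icc (-1 : ℝ) 1, sobolevDensity u (x, r) :=
  (enorm_le_lintegral_enorm_add_enorm_deriv (u := fun r => u (x, r)) (by fun_prop)
    (by norm_num) hy).trans <| lintegral_mono fun r =>
      enorm_add_enorm_deriv_comp_le_sobolevDensity hu (by simp [enorm_eq_nnnorm, Prod.nnnorm_def])
        (hasDerivAt_prodMk_right x r)

lemma enorm_le_lintegral_sobolevDensity_fst (hu : Differentiable ℝ u) (x y : ℝ) :
    ‖u (x, y)‖ₑ ≤ ∫⁻ r, sobolevDensity u (r, y) :=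
  (enorm_le_lintegral_enorm_add_enorm_deriv (u := fun r => u (r, y)) (by fun_prop)
    le_rfl (left_mem_Icc.2 (le_add_of_nonneg_right zero_le_one))).trans <|
      (lintegral_mono fun r => enorm_add_enorm_deriv_comp_le_sobolevDensity hu
        (by simp [enorm_eq_nnnorm, Prod.nnnorm_def]) (hasDerivAt_prodMk_left y r)).trans
          (setLIntegral_le_lintegral _ _)

lemma lintegral_enorm_slice_le_lintegral_sobolevDensity (hu : Differentiable ℝ u) (x : ℝ) :
    ∫⁻ y in Icc (-1 : ℝ) 1, ‖u (x, y)‖ₑ ≤ ∫⁻ z in channel, sobolevDensity u z := by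
  rw [lintegral_channel_symm (measurable_sobolevDensity hu)]
  exact lintegral_mono fun y => enorm_le_lintegral_sobolevDensity_fst hu x y

-- Gagliardo: bound one factor of `‖u (x, y)‖²` by its vertical and one by its horizontal line.
lemma eLpNorm_two_le_lintegral_sobolevDensity (hu : Differentiable ℝ u) :
    eLpNorm u 2 (volume.restrict channel) ≤ ∫⁻ z in channel, sobolevDensity u z := by
  rw [eLpNorm_eq_lintegral_rpow_enorm_toReal two_ne_zero ofNat_ne_top, one_div,
    ENNReal.rpow_inv_le_iff (by norm_num)]
  simp only [toReal_ofNat, ENNReal.rpow_ofNat]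
  rw [← lintegral_channel_marginal_mul_marginal (measurable_sobolevDensity hu)]
  refine setLIntegral_mono' (MeasurableSet.univ.prod measurableSet_Icc) fun z hz => ?_
  rw [sq]
  exact mul_le_mul' (enorm_le_lintegral_sobolevDensity_snd hu z.1 hz.2)
    (enorm_le_lintegral_sobolevDensity_fst hu z.1 z.2)

end SobolevDensity

lemma lintegral_mul_le_eLpNorm_two_mul {X : Type*} [MeasurableSpace X] {μ : Measure X}
    {f g : X → ℝ≥0∞} (hf : AEMeasurable f μ) (hg : AEMeasurable g μ) :
    ∫⁻ x, f x * g x ∂μ ≤ eLpNorm f 2 μ * eLpNorm g 2 μ := by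
  simpa only [eLpNorm_eq_lintegral_rpow_enorm_toReal two_ne_zero ofNat_ne_top, toReal_ofNat,
    enorm_eq_self, Pi.mul_apply] using
    ENNReal.lintegral_mul_le_Lp_mul_Lq μ Real.HolderConjugate.two_two hf hg

section Powers

/-- The `H¹` norm on the channel. -/
noncomputable def h1Norm (v : ℝ × ℝ → ℝ) : ℝ≥0∞ :=
  eLpNorm v 2 (volume.restrict channel)
    + eLpNorm (fun z => ‖fderiv ℝ v z‖) 2 (volume.restrict channel)

variable {v : ℝ × ℝ → ℝ}

lemma eLpNorm_two_sobolevDensity_le_h1Norm (hv : Differentiable ℝ v) :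
    eLpNorm (sobolevDensity v) 2 (volume.restrict channel) ≤ h1Norm v := by
  refine (eLpNorm_add_le (f := fun z => ‖v z‖ₑ) (g := fun z => ‖fderiv ℝ v z‖ₑ)
    hv.continuous.enorm.aestronglyMeasurable
    (measurable_fderiv ℝ v).enorm.aestronglyMeasurable one_le_two).trans_eq ?_
  rw [eLpNorm_enorm, eLpNorm_enorm, h1Norm, eLpNorm_norm]

lemma sobolevDensity_pow_succ_le (hv : Differentiable ℝ v) (k : ℕ) (z : ℝ × ℝ) :
    sobolevDensity (v ^ (k + 1)) z ≤ (k + 1) * (‖(v ^ k) z‖ₑ * sobolevDensity v z) := by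
  have hk : ‖((k + 1 : ℕ) : ℝ)‖ₑ = k + 1 := by
    rw [Real.enorm_natCast, Nat.cast_add_one]
  calc sobolevDensity (v ^ (k + 1)) z
      = ‖(v ^ k) z‖ₑ * ‖v z‖ₑ + (k + 1) * (‖(v ^ k) z‖ₑ * ‖fderiv ℝ v z‖ₑ) := by
        rw [sobolevDensity, fderiv_pow (k + 1) (hv z), pow_succ, Pi.mul_apply, enorm_mul,
          add_tsub_cancel_right, nsmul_eq_mul, enorm_smul, enorm_mul, hk, mul_assoc, Pi.pow_apply]
    _ ≤ (k + 1) * (‖(v ^ k) z‖ₑ * ‖v z‖ₑ) + (k + 1) * (‖(v ^ k) z‖ₑ * ‖fderiv ℝ v z‖ₑ) := by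
        gcongr ?_ + _
        exact le_mul_of_one_le_left' le_add_self
    _ = (k + 1) * (‖(v ^ k) z‖ₑ * sobolevDensity v z) := by
        rw [sobolevDensity, ← mul_add, ← mul_add]

lemma lintegral_sobolevDensity_pow_succ_le (hv : Differentiable ℝ v) (k : ℕ) :
    ∫⁻ z in channel, sobolevDensity (v ^ (k + 1)) z ≤
      (k + 1) * (eLpNorm (v ^ k) 2 (volume.restrict channel) * h1Norm v) := by
  have hvk : AEMeasurable (fun z => ‖(v ^ k) z‖ₑ) (volume.restrict channel) :=
    (hv.continuous.pow k).enorm.aemeasurable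
  refine (lintegral_mono (sobolevDensity_pow_succ_le hv k)).trans ?_
  rw [lintegral_const_mul' _ _ (by finiteness), ← eLpNorm_enorm]
  gcongr
  exact (lintegral_mul_le_eLpNorm_two_mul hvk (measurable_sobolevDensity hv).aemeasurable).trans
    (by gcongr; exact eLpNorm_two_sobolevDensity_le_h1Norm hv)

lemma eLpNorm_two_pow_succ_le (hv : Differentiable ℝ v) (k : ℕ) :
    eLpNorm (v ^ (k + 1)) 2 (volume.restrict channel) ≤
      (k + 1).factorial * h1Norm v ^ (k + 1) := by
  induction k with
  | zero => simp [h1Norm]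
  | succ k ih =>
    calc eLpNorm (v ^ (k + 2)) 2 (volume.restrict channel)
        ≤ ∫⁻ z in channel, sobolevDensity (v ^ (k + 2)) z :=
          eLpNorm_two_le_lintegral_sobolevDensity (hv.pow (k + 2))
      _ ≤ ((k + 1 : ℕ) + 1) * (eLpNorm (v ^ (k + 1)) 2 (volume.restrict channel) * h1Norm v) :=
          lintegral_sobolevDensity_pow_succ_le hv (k + 1)
      _ ≤ ((k + 1 : ℕ) + 1) * ((k + 1).factorial * h1Norm v ^ (k + 1) * h1Norm v) := by gcongr
      _ = (k + 2).factorial * h1Norm v ^ (k + 2) := by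
          rw [Nat.factorial_succ (k + 1)]
          push_cast
          ring

end Powers

section MixedNorm

/-- The square of the `L^{2m}` norm of `v` on the vertical slice at `x`; the mixed norm embedding
bounds its norms in `x`. -/
noncomputable def sliceNormSq (m : ℕ) (v : ℝ × ℝ → ℝ) (x : ℝ) : ℝ≥0∞ :=
  (∫⁻ y in Icc (-1 : ℝ) 1, (‖v (x, y)‖ₑ ^ 2) ^ (m : ℝ)) ^ (1 / (m : ℝ))

variable {v : ℝ × ℝ → ℝ} {m : ℕ}

lemma measurable_sliceNormSq (hv : Continuous v) : Measurable (sliceNormSq m v) :=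
  ((hv.measurable.enorm.pow_const 2).pow_const (m : ℝ)).lintegral_prod_right'.pow_const _

lemma sliceNormSq_le (hv : Differentiable ℝ v) (hm : m ≠ 0) (x : ℝ) :
    sliceNormSq m v x ≤ (2 * m).factorial * h1Norm v ^ 2 := by
  have hm1 : (1 : ℝ) ≤ m := by exact_mod_cast Nat.one_le_iff_ne_zero.2 hm
  obtain ⟨k, hk⟩ : ∃ k, 2 * m = k + 2 := ⟨2 * m - 2, by omega⟩
  rw [sliceNormSq, one_div, ENNReal.rpow_inv_le_iff (by positivity)]
  calc ∫⁻ y in Icc (-1 : ℝ) 1, (‖v (x, y)‖ₑ ^ 2) ^ (m : ℝ)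
      = ∫⁻ y in Icc (-1 : ℝ) 1, ‖(v ^ (k + 2)) (x, y)‖ₑ := by
        simp only [ENNReal.rpow_natCast, ← pow_mul, hk, Pi.pow_apply, enorm_pow]
    _ ≤ ∫⁻ z in channel, sobolevDensity (v ^ (k + 2)) z :=
        lintegral_enorm_slice_le_lintegral_sobolevDensity (hv.pow _) x
    _ ≤ ((k + 1 : ℕ) + 1) * (eLpNorm (v ^ (k + 1)) 2 (volume.restrict channel) * h1Norm v) :=
        lintegral_sobolevDensity_pow_succ_le hv (k + 1)
    _ ≤ ((k + 1 : ℕ) + 1) * ((k + 1).factorial * h1Norm v ^ (k + 1) * h1Norm v) := by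
        gcongr
        exact eLpNorm_two_pow_succ_le hv k
    _ = (2 * m).factorial * (h1Norm v ^ 2) ^ (m : ℝ) := by
        rw [ENNReal.rpow_natCast, ← pow_mul, hk, Nat.factorial_succ (k + 1)]
        push_cast
        ring
    _ ≤ ((2 * m).factorial * h1Norm v ^ 2) ^ (m : ℝ) := by
        rw [ENNReal.mul_rpow_of_nonneg _ _ (by positivity)]
        gcongr
        exact ENNReal.le_rpow_self_of_one_le (mod_cast (2 * m).factorial_pos) hm1

lemma lintegral_sliceNormSq_le (hv : Differentiable ℝ v) (hm : m ≠ 0) :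
    ∫⁻ x, sliceNormSq m v x ≤ 4 * h1Norm v ^ 2 := by
  have hm0 : (m : ℝ) ≠ 0 := Nat.cast_ne_zero.2 hm
  have hm1 : (1 : ℝ) ≤ m := by exact_mod_cast Nat.one_le_iff_ne_zero.2 hm
  have hv2 : Differentiable ℝ (v ^ 2) := hv.pow 2
  have hslice (x : ℝ) : sliceNormSq m v x ≤
      2 * ∫⁻ r in Icc (-1 : ℝ) 1, sobolevDensity (v ^ 2) (x, r) := by
    set D := ∫⁻ r in Icc (-1 : ℝ) 1, sobolevDensity (v ^ 2) (x, r)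
    calc sliceNormSq m v x
        ≤ (∫⁻ _ in Icc (-1 : ℝ) 1, D ^ (m : ℝ)) ^ (1 / (m : ℝ)) := by
          refine ENNReal.rpow_le_rpow (setLIntegral_mono' measurableSet_Icc fun y hy => ?_)
            (by positivity)
          rw [← enorm_pow]
          gcongr
          exact enorm_le_lintegral_sobolevDensity_snd hv2 x hy
      _ = 2 ^ (1 / (m : ℝ)) * D := by
          rw [setLIntegral_const, Real.volume_Icc, ENNReal.mul_rpow_of_nonneg _ _ (by positivity),
            ← ENNReal.rpow_mul, mul_one_div_cancel hm0, ENNReal.rpow_one, mul_comm]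
          norm_num
      _ ≤ 2 * D := by
          gcongr
          exact (ENNReal.rpow_le_rpow_of_exponent_le one_le_two
            (div_le_one_of_le₀ hm1 (by positivity))).trans_eq (ENNReal.rpow_one 2)
  calc ∫⁻ x, sliceNormSq m v x
      ≤ ∫⁻ x, 2 * ∫⁻ r in Icc (-1 : ℝ) 1, sobolevDensity (v ^ 2) (x, r) := lintegral_mono hslice
    _ = 2 * ∫⁻ z in channel, sobolevDensity (v ^ 2) z := by
        rw [lintegral_const_mul' _ _ ofNat_ne_top,
          lintegral_channel (measurable_sobolevDensity hv2)]
    _ ≤ 2 * (((1 : ℕ) + 1) * (h1Norm v * h1Norm v)) := by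
        gcongr
        refine (lintegral_sobolevDensity_pow_succ_le hv 1).trans ?_
        rw [pow_one]
        gcongr
        exact le_self_add
    _ = 4 * h1Norm v ^ 2 := by
        rw [Nat.cast_one]
        ring

end MixedNorm

section WeightedSlice

lemma lintegral_mul_le_of_le_of_lintegral_le {X : Type*} [MeasurableSpace X] {μ : Measure X}
    {p q : ℝ} (hpq : p.HolderConjugate q) {f g : X → ℝ≥0∞} (hf : AEMeasurable f μ)
    (hg : AEMeasurable g μ) {M : ℝ≥0∞} (hgM : ∀ x, g x ≤ M) (hint : ∫⁻ x, g x ∂μ ≤ M) :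
    ∫⁻ x, f x * g x ∂μ ≤ (∫⁻ x, f x ^ p ∂μ) ^ (1 / p) * M := by
  have hpow (t : ℝ≥0∞) : t ^ q = t ^ (q - 1) * t := by
    nth_rw 3 [← ENNReal.rpow_one t]
    rw [← ENNReal.rpow_add_of_nonneg _ _ (sub_nonneg.2 hpq.symm.lt.le) zero_le_one, sub_add_cancel]
  have hq0 : 0 ≤ q - 1 := sub_nonneg.2 hpq.symm.lt.le
  refine (ENNReal.lintegral_mul_le_Lp_mul_Lq μ hpq hf hg).trans ?_
  gcongr
  rw [one_div, ENNReal.rpow_inv_le_iff hpq.symm.pos]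
  calc ∫⁻ x, g x ^ q ∂μ ≤ ∫⁻ x, M ^ (q - 1) * g x ∂μ := by
        refine lintegral_mono fun x => ?_
        rw [hpow]
        gcongr
        exact hgM x
    _ = M ^ (q - 1) * ∫⁻ x, g x ∂μ := lintegral_const_mul'' _ hg
    _ ≤ M ^ (q - 1) * M := by gcongr
    _ = M ^ q := (hpow M).symm

lemma exists_setLIntegral_abs_sub_rpow_le (a b : ℝ) {β : ℝ} (hβ : -1 < β) :
    ∃ W : ℝ≥0∞, W ≠ ⊤ ∧ ∀ y₀ ∈ Icc a b,
      ∫⁻ y in Icc a b, ENNReal.ofReal (|y - y₀| ^ β) ≤ W := by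
  let w : ℝ → ℝ≥0∞ := fun t => ENNReal.ofReal (|t| ^ β)
  refine ⟨∫⁻ t in Icc (a - b) (b - a), w t, ?_, fun y₀ hy₀ => ?_⟩
  · have hloc : LocallyIntegrable (fun t : ℝ => |t| ^ β) := by
      refine locallyIntegrable_of_norm_le_rpow (C := 1) (α := -β) (by simp)
        (by simpa using neg_lt.1 hβ) (ae_of_all _ fun t => ?_)
        (Measurable.aestronglyMeasurable (by fun_prop))
      rw [neg_neg, one_mul, Real.norm_of_nonneg (by positivity), Real.norm_eq_abs]
    exact (hloc.integrableOn_isCompact isCompact_Icc).lintegral_lt_top.ne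
  · calc ∫⁻ y in Icc a b, w (y - y₀)
        ≤ ∫⁻ y in (fun y => y - y₀) ⁻¹' Icc (a - b) (b - a), w (y - y₀) := by
          refine lintegral_mono_set fun y hy => ?_
          exact ⟨by linarith [hy.1, hy₀.2], by linarith [hy.2, hy₀.1]⟩
      _ = ∫⁻ t in Icc (a - b) (b - a), w t :=
          (measurePreserving_sub_right volume y₀).setLIntegral_comp_preimage measurableSet_Icc
            (by fun_prop)

lemma exists_setLIntegral_mul_abs_sub_rpow_le (a b : ℝ) {r q β : ℝ} (hrq : r.HolderConjugate q)
    (hβ : -1 < β * q) :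
    ∃ W : ℝ≥0∞, W ≠ ⊤ ∧ ∀ f : ℝ → ℝ≥0∞, AEMeasurable f (volume.restrict (Icc a b)) →
      ∀ y₀ ∈ Icc a b, ∫⁻ y in Icc a b, f y * ENNReal.ofReal (|y - y₀| ^ β) ≤
        W * (∫⁻ y in Icc a b, f y ^ r) ^ (1 / r) := by
  obtain ⟨W, hW, hle⟩ := exists_setLIntegral_abs_sub_rpow_le a b hβ
  have hq := hrq.symm.one_div_nonneg
  refine ⟨W ^ (1 / q), by finiteness, fun f hf y₀ hy₀ => ?_⟩
  refine (ENNReal.lintegral_mul_le_Lp_mul_Lq _ hrq hf (by fun_prop)).trans ?_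
  rw [mul_comm]
  gcongr
  refine le_trans (le_of_eq ?_) (hle y₀ hy₀)
  refine lintegral_congr fun y => ?_
  rw [ENNReal.ofReal_rpow_of_nonneg (by positivity) hrq.symm.nonneg,
    ← Real.rpow_mul (abs_nonneg _)]

end WeightedSlice

section DyadicPoint

/-- The dyadic subdivision points `c + 2⁻ⁿ (d - c)`, along which the Morrey inequality is
telescoped towards the endpoint `c`. -/
noncomputable def dyadicPoint (c d : ℝ) (n : ℕ) : ℝ :=
  AffineMap.lineMap c d ((2⁻¹ : ℝ) ^ n)

variable {c d : ℝ}

lemma dyadicPoint_zero : dyadicPoint c d 0 = d := by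
  simp [dyadicPoint]

lemma dyadicPoint_succ (n : ℕ) :
    dyadicPoint c d (n + 1) = AffineMap.lineMap c (dyadicPoint c d n) (2⁻¹ : ℝ) := by
  simp only [dyadicPoint, AffineMap.lineMap_apply_ring']
  ring

lemma edist_dyadicPoint (n : ℕ) : edist c (dyadicPoint c d n) = 2⁻¹ ^ n * edist c d := by
  rw [dyadicPoint, edist_dist, dist_left_lineMap, ENNReal.ofReal_mul (norm_nonneg _), ← edist_dist,
    ofReal_norm, enorm_pow, enorm_inv two_ne_zero]
  simp [Real.enorm_eq_ofReal]

lemma edist_dyadicPoint_succ (n : ℕ) :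
    edist c (dyadicPoint c d (n + 1)) = 2⁻¹ * edist c (dyadicPoint c d n) := by
  rw [edist_dyadicPoint, edist_dyadicPoint, pow_succ', mul_assoc]

lemma ne_dyadicPoint (hcd : c ≠ d) (n : ℕ) : c ≠ dyadicPoint c d n := by
  rw [← edist_pos, edist_dyadicPoint]
  exact ENNReal.mul_pos (by simp) (edist_pos.2 hcd).ne'

lemma antitone_uIcc_dyadicPoint : Antitone fun n => uIcc c (dyadicPoint c d n) := by
  refine antitone_nat_of_succ_le fun n => uIcc_subset_uIcc_left ?_
  rw [dyadicPoint_succ, ← segment_eq_uIcc]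
  exact lineMap_mem_segment ℝ _ _ (by norm_num)

lemma uIcc_dyadicPoint_subset (n : ℕ) : uIcc c (dyadicPoint c d n) ⊆ uIcc c d := by
  simpa only [dyadicPoint_zero] using antitone_uIcc_dyadicPoint (c := c) (d := d) n.zero_le

lemma edist_le_edist_of_mem_uIcc {a b : ℝ} (ha : a ∈ uIcc c d) (hb : b ∈ uIcc c d) :
    edist a b ≤ edist c d := by
  rw [edist_dist, edist_dist]
  exact ENNReal.ofReal_le_ofReal (Real.dist_le_of_mem_uIcc ha hb)

lemma tendsto_of_mem_uIcc_dyadicPoint {a : ℕ → ℝ} (ha : ∀ n, a n ∈ uIcc c (dyadicPoint c d n)) :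
    Filter.Tendsto a Filter.atTop (nhds c) := by
  rw [tendsto_iff_edist_tendsto_0]
  have h0 : Filter.Tendsto (fun n => 2⁻¹ ^ n * edist c d) Filter.atTop (nhds 0) := by
    simpa using ENNReal.Tendsto.mul_const (ENNReal.tendsto_pow_atTop_nhds_zero_of_lt_one
      (by simp : (2⁻¹ : ℝ≥0∞) < 1)) (Or.inr (edist_ne_top c d))
  refine tendsto_of_tendsto_of_tendsto_of_le_of_le tendsto_const_nhds h0 (fun _ => zero_le)
    fun n => ?_
  exact (edist_le_edist_of_mem_uIcc (ha n) left_mem_uIcc).trans_eq (edist_dyadicPoint n)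

end DyadicPoint

section Hajlasz

/-- The constant of the fractional Morrey inequality with Hölder exponent `α`. -/
noncomputable def morreyConst (α : ℝ) : ℝ≥0∞ := 6 / (1 - 2⁻¹ ^ α) + 3

lemma morreyConst_ne_top {α : ℝ} (hα : 0 < α) : morreyConst α ≠ ⊤ := by
  have hlt : (2⁻¹ : ℝ≥0∞) ^ α < 1 := ENNReal.rpow_lt_one (by simp) hα
  exact ENNReal.add_ne_top.2
    ⟨ENNReal.div_ne_top ofNat_ne_top (tsub_pos_of_lt hlt).ne', ofNat_ne_top⟩

/-- `h` is a Hajłasz gradient of order `θ` of `g` on `S`. Fractional Sobolev regularity is used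
through the existence of such an `h` in `L^p`, as in the Hajłasz–Sobolev space `M^{θ,p}`. -/
def IsHajlaszGradient {X F : Type*} [PseudoEMetricSpace X] [PseudoEMetricSpace F]
    (θ : ℝ) (S : Set X) (g : X → F) (h : X → ℝ≥0∞) : Prop :=
  ∀ a ∈ S, ∀ b ∈ S, edist (g a) (g b) ≤ edist a b ^ θ * (h a + h b)

lemma volume_uIcc_eq_edist (c d : ℝ) : volume (uIcc c d) = edist c d := by
  rw [Real.volume_interval, edist_comm, edist_dist, Real.dist_eq]

lemma two_inv_mul_rpow_neg_le {x : ℝ≥0∞} (hx : x ≠ ⊤) {r : ℝ} (hr : r ≤ 1) :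
    (2⁻¹ * x) ^ (-r) ≤ 2 * x ^ (-r) := by
  rw [ENNReal.mul_rpow_of_ne_top (by finiteness) hx, ENNReal.inv_rpow, ENNReal.rpow_neg 2,
    inv_inv]
  gcongr
  exact (ENNReal.rpow_le_rpow_of_exponent_le one_le_two hr).trans_eq (ENNReal.rpow_one 2)

variable {F : Type*} [PseudoEMetricSpace F] {g : ℝ → F} {h : ℝ → ℝ≥0∞} {θ p c d : ℝ} {S : Set ℝ}

lemma exists_mem_uIcc_le_edist_rpow_mul (hcd : c ≠ d) (hS : uIcc c d ⊆ S) (hp : 0 < p)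
    (hh : AEMeasurable h (volume.restrict S)) :
    ∃ a ∈ uIcc c d, h a ≤ edist c d ^ (-(1 / p)) * (∫⁻ y in S, h y ^ p) ^ (1 / p) := by
  obtain ⟨a, ha, hle⟩ := exists_le_setLAverage (μ := volume) (s := uIcc c d)
    (by rw [volume_uIcc_eq_edist]; exact (edist_pos.2 hcd).ne')
    (by rw [volume_uIcc_eq_edist]; finiteness)
    ((hh.mono_measure (Measure.restrict_mono hS le_rfl)).pow_const p)
  refine ⟨a, ha, ?_⟩
  rw [setLAverage_eq, volume_uIcc_eq_edist, ← ENNReal.le_rpow_inv_iff hp, ← one_div,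
    ENNReal.div_rpow_of_nonneg _ _ (by positivity), div_eq_mul_inv, ← ENNReal.rpow_neg,
    mul_comm] at hle
  refine hle.trans ?_
  gcongr

lemma IsHajlaszGradient.edist_le_three_mul (hgh : IsHajlaszGradient θ S g h)
    (hcd : c ≠ d) (hS : uIcc c d ⊆ S) (hθ : 0 ≤ θ) {a b : ℝ} (ha : a ∈ uIcc c d)
    (hb : b ∈ uIcc c d) {K : ℝ≥0∞} (hha : h a ≤ edist c d ^ (-(1 / p)) * K)
    (hhb : h b ≤ 2 * (edist c d ^ (-(1 / p)) * K)) :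
    edist (g a) (g b) ≤ 3 * edist c d ^ (θ - 1 / p) * K :=
  calc edist (g a) (g b) ≤ edist a b ^ θ * (h a + h b) := hgh a (hS ha) b (hS hb)
    _ ≤ edist c d ^ θ *
          (edist c d ^ (-(1 / p)) * K + 2 * (edist c d ^ (-(1 / p)) * K)) := by
        gcongr
        exact edist_le_edist_of_mem_uIcc ha hb
    _ = 3 * (edist c d ^ θ * edist c d ^ (-(1 / p))) * K := by ring
    _ = 3 * edist c d ^ (θ - 1 / p) * K := by
        rw [← ENNReal.rpow_add _ _ (edist_pos.2 hcd).ne' (edist_ne_top c d), ← sub_eq_add_neg]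

-- Telescope along points where `h` is below its `L^p` average over the `n`-th dyadic interval.
lemma IsHajlaszGradient.exists_edist_left_le (hgh : IsHajlaszGradient θ S g h)
    (hp : 1 ≤ p) (hθ : 1 / p < θ) (hg : ContinuousOn g S) (hh : AEMeasurable h (volume.restrict S))
    (hS : uIcc c d ⊆ S) (hcd : c ≠ d) :
    ∃ a ∈ uIcc c d, h a ≤ edist c d ^ (-(1 / p)) * (∫⁻ y in S, h y ^ p) ^ (1 / p) ∧
      edist (g a) (g c) ≤ 3 * edist c d ^ (θ - 1 / p) * (∫⁻ y in S, h y ^ p) ^ (1 / p) /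
        (1 - 2⁻¹ ^ (θ - 1 / p)) := by
  have hp0 : 0 < p := one_pos.trans_le hp
  have hθ0 : 0 ≤ θ := le_trans (by positivity) hθ.le
  have hsub (n) : uIcc c (dyadicPoint c d n) ⊆ S := (uIcc_dyadicPoint_subset n).trans hS
  choose a ha hha using fun n => exists_mem_uIcc_le_edist_rpow_mul (ne_dyadicPoint hcd n) (hsub n)
    hp0 hh
  have hg_tendsto : Filter.Tendsto (g ∘ a) Filter.atTop (nhds (g c)) :=
    (hg c (hS left_mem_uIcc)).tendsto.comp (tendsto_nhdsWithin_iff.2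
      ⟨tendsto_of_mem_uIcc_dyadicPoint ha, .of_forall fun n => hsub n (ha n)⟩)
  have hstep (n) : edist (g (a n)) (g (a (n + 1))) ≤ 3 * edist c d ^ (θ - 1 / p) *
      (∫⁻ y in S, h y ^ p) ^ (1 / p) * (2⁻¹ ^ (θ - 1 / p)) ^ n := by
    refine (hgh.edist_le_three_mul (ne_dyadicPoint hcd n) (hsub n) hθ0 (ha n)
      (antitone_uIcc_dyadicPoint n.le_succ (ha (n + 1))) (hha n)
      ((hha (n + 1)).trans ?_)).trans_eq ?_
    · rw [edist_dyadicPoint_succ, ← mul_assoc]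
      gcongr
      exact two_inv_mul_rpow_neg_le (edist_ne_top _ _) ((div_le_one hp0).2 hp)
    · rw [edist_dyadicPoint, ENNReal.mul_rpow_of_nonneg _ _ (sub_nonneg.2 hθ.le),
        ← ENNReal.rpow_natCast, ← ENNReal.rpow_natCast, ← ENNReal.rpow_mul, ← ENNReal.rpow_mul,
        mul_comm (n : ℝ)]
      ring
  exact ⟨a 0, uIcc_dyadicPoint_subset 0 (ha 0), by simpa only [dyadicPoint_zero] using hha 0,
    edist_le_of_edist_le_geometric_of_tendsto₀ _ _ hstep hg_tendsto⟩

lemma IsHajlaszGradient.edist_le_morreyConst_mul (hgh : IsHajlaszGradient θ S g h)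
    (hp : 1 ≤ p) (hθ : 1 / p < θ) (hg : ContinuousOn g S) (hh : AEMeasurable h (volume.restrict S))
    (hS : uIcc c d ⊆ S) :
    edist (g c) (g d) ≤ morreyConst (θ - 1 / p) * edist c d ^ (θ - 1 / p) *
      (∫⁻ y in S, h y ^ p) ^ (1 / p) := by
  rcases eq_or_ne c d with rfl | hcd
  · simp only [edist_self, zero_le]
  have hθ0 : 0 ≤ θ := le_trans (by positivity) hθ.le
  obtain ⟨a, ha, hha, hac⟩ := hgh.exists_edist_left_le hp hθ hg hh hS hcd
  obtain ⟨b, hb, hhb, hbd⟩ := hgh.exists_edist_left_le hp hθ hg hh (uIcc_comm c d ▸ hS) hcd.symm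
  rw [uIcc_comm] at hb
  rw [edist_comm d c] at hhb hbd
  have hab := hgh.edist_le_three_mul hcd hS hθ0 ha hb hha
    (hhb.trans (le_mul_of_one_le_left' one_le_two))
  set R := 3 * edist c d ^ (θ - 1 / p) * (∫⁻ y in S, h y ^ p) ^ (1 / p) with hR
  calc edist (g c) (g d) ≤ edist (g c) (g a) + edist (g a) (g b) + edist (g b) (g d) :=
        edist_triangle4 _ _ _ _
    _ ≤ R / (1 - 2⁻¹ ^ (θ - 1 / p)) + R + R / (1 - 2⁻¹ ^ (θ - 1 / p)) := by
        rw [edist_comm (g c)]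
        gcongr
    _ = morreyConst (θ - 1 / p) * edist c d ^ (θ - 1 / p) *
          (∫⁻ y in S, h y ^ p) ^ (1 / p) := by
        simp only [hR, morreyConst, div_eq_mul_inv]
        ring

end Hajlasz

section Gagliardo

variable {E : Type*} [NormedAddCommGroup E] {θ p : ℝ} {S : Set (ℝ × ℝ)} {f : ℝ × ℝ → E}

/-- The inner integral of the Gagliardo seminorm `gag2`. -/
noncomputable def gagDensity (θ p : ℝ) (S : Set (ℝ × ℝ)) (f : ℝ × ℝ → E) (z : ℝ × ℝ) : ℝ≥0∞ :=
  ∫⁻ w in S, ENNReal.ofReal (‖f z - f w‖ ^ p / ‖z - w‖ ^ (2 + θ * p))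

lemma measurable_gagIntegrand (θ p : ℝ) (hf : Continuous f) :
    Measurable fun w : (ℝ × ℝ) × (ℝ × ℝ) =>
      ENNReal.ofReal (‖f w.1 - f w.2‖ ^ p / ‖w.1 - w.2‖ ^ (2 + θ * p)) := by
  have hnum : Measurable fun w : (ℝ × ℝ) × (ℝ × ℝ) => ‖f w.1 - f w.2‖ :=
    Continuous.measurable (by fun_prop)
  fun_prop

lemma measurable_gagDensity (θ p : ℝ) (S : Set (ℝ × ℝ)) (hf : Continuous f) :
    Measurable (gagDensity θ p S f) :=
  (measurable_gagIntegrand θ p hf).lintegral_prod_right'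

lemma enorm_sub_rpow_le_gagIntegrand (hp : 0 < p) (hθ : 0 ≤ θ) {z w : ℝ × ℝ} {r : ℝ}
    (hzw : ‖z - w‖ ≤ r) :
    ‖f z - f w‖ₑ ^ p ≤ ENNReal.ofReal (r ^ (2 + θ * p)) *
      ENNReal.ofReal (‖f z - f w‖ ^ p / ‖z - w‖ ^ (2 + θ * p)) := by
  rcases eq_or_ne z w with rfl | hne
  · simp [ENNReal.zero_rpow_of_pos hp]
  have hpos : 0 < ‖z - w‖ := norm_sub_pos_iff.2 hne
  have hr : 0 ≤ r := hpos.le.trans hzw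
  rw [← ofReal_norm, ENNReal.ofReal_rpow_of_nonneg (norm_nonneg _) hp.le,
    ← ENNReal.ofReal_mul (by positivity)]
  refine ENNReal.ofReal_le_ofReal ?_
  calc ‖f z - f w‖ ^ p = ‖z - w‖ ^ (2 + θ * p) * (‖f z - f w‖ ^ p / ‖z - w‖ ^ (2 + θ * p)) :=
        (mul_div_cancel₀ _ (Real.rpow_pos_of_pos hpos _).ne').symm
    _ ≤ r ^ (2 + θ * p) * (‖f z - f w‖ ^ p / ‖z - w‖ ^ (2 + θ * p)) := by gcongr

lemma setLIntegral_enorm_sub_rpow_le_gagDensity (hp : 0 < p) (hθ : 0 ≤ θ) {Q : Set (ℝ × ℝ)}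
    (hQm : MeasurableSet Q) (hQ : Q ⊆ S) {z : ℝ × ℝ} {r : ℝ} (hr : ∀ w ∈ Q, ‖z - w‖ ≤ r) :
    ∫⁻ w in Q, ‖f z - f w‖ₑ ^ p ≤ ENNReal.ofReal (r ^ (2 + θ * p)) * gagDensity θ p S f z :=
  calc ∫⁻ w in Q, ‖f z - f w‖ₑ ^ p
      ≤ ∫⁻ w in Q, ENNReal.ofReal (r ^ (2 + θ * p)) *
          ENNReal.ofReal (‖f z - f w‖ ^ p / ‖z - w‖ ^ (2 + θ * p)) :=
        setLIntegral_mono' hQm fun w hw => enorm_sub_rpow_le_gagIntegrand hp hθ (hr w hw)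
    _ ≤ ENNReal.ofReal (r ^ (2 + θ * p)) * gagDensity θ p S f z := by
        rw [lintegral_const_mul' _ _ (by finiteness), gagDensity]
        gcongr

lemma enorm_sub_rpow_le (hp : 1 ≤ p) (a b c : E) :
    ‖a - b‖ₑ ^ p ≤ 2 ^ p * (‖a - c‖ₑ ^ p + ‖b - c‖ₑ ^ p) :=
  calc ‖a - b‖ₑ ^ p ≤ (‖a - c‖ₑ + ‖b - c‖ₑ) ^ p := by
        rw [← edist_eq_enorm_sub, ← edist_eq_enorm_sub, ← edist_eq_enorm_sub]
        gcongr
        exact edist_triangle_right a b c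
    _ ≤ 2 ^ (p - 1) * (‖a - c‖ₑ ^ p + ‖b - c‖ₑ ^ p) := ENNReal.rpow_add_le_mul_rpow_add_rpow _ _ hp
    _ ≤ 2 ^ p * (‖a - c‖ₑ ^ p + ‖b - c‖ₑ ^ p) := by
        gcongr
        · exact one_le_two
        · exact sub_le_self p zero_le_one

-- Average `‖f z - f z'‖ ≤ ‖f z - f w‖ + ‖f z' - f w‖` over `w` in `Q`.
lemma enorm_sub_rpow_mul_volume_le_gagDensity (hp : 1 ≤ p) (hθ : 0 ≤ θ) (hf : Continuous f)
    {Q : Set (ℝ × ℝ)} (hQm : MeasurableSet Q) (hQ : Q ⊆ S) {z z' : ℝ × ℝ} {r : ℝ}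
    (hz : ∀ w ∈ Q, ‖z - w‖ ≤ r) (hz' : ∀ w ∈ Q, ‖z' - w‖ ≤ r) :
    ‖f z - f z'‖ₑ ^ p * volume Q ≤ 2 ^ p * ENNReal.ofReal (r ^ (2 + θ * p)) *
      (gagDensity θ p S f z + gagDensity θ p S f z') := by
  have hp0 : 0 < p := one_pos.trans_le hp
  have hm : Measurable fun w => ‖f z - f w‖ₑ ^ p :=
    (Continuous.measurable (by fun_prop)).pow_const p
  rw [← setLIntegral_const, mul_assoc, mul_add]
  refine (lintegral_mono fun w => enorm_sub_rpow_le hp (f z) (f z') (f w)).trans ?_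
  rw [lintegral_const_mul' _ _ (by finiteness), lintegral_add_left hm]
  gcongr
  · exact setLIntegral_enorm_sub_rpow_le_gagDensity hp0 hθ hQm hQ hz
  · exact setLIntegral_enorm_sub_rpow_le_gagDensity hp0 hθ hQm hQ hz'

lemma enorm_sub_rpow_le_gagDensity_slice (hp : 1 ≤ p) (hθ : 0 ≤ θ) (hf : Continuous f) (x : ℝ)
    {a b : ℝ} (ha : a ∈ Icc (-1 : ℝ) 1) (hb : b ∈ Icc (-1 : ℝ) 1) (hab : a ≠ b) :
    ‖f (x, a) - f (x, b)‖ₑ ^ p ≤ 2 ^ p * edist a b ^ (θ * p) *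
      (gagDensity θ p channel f (x, a) + gagDensity θ p channel f (x, b)) := by
  let Q : Set (ℝ × ℝ) := Icc x (x + dist a b) ×ˢ uIcc a b
  have hab0 : edist a b ≠ 0 := (edist_pos.2 hab).ne'
  have hvol : volume Q = edist a b ^ (2 : ℝ) := by
    rw [Measure.volume_eq_prod, Measure.prod_prod, Real.volume_Icc, add_sub_cancel_left,
      ← edist_dist, volume_uIcc_eq_edist, ENNReal.rpow_two, sq]
  have hQ : Q ⊆ channel := prod_mono (subset_univ _) (uIcc_subset_Icc ha hb)
  have hdist {t : ℝ} (ht : t ∈ uIcc a b) {w : ℝ × ℝ} (hw : w ∈ Q) : ‖(x, t) - w‖ ≤ dist a b := by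
    rw [← dist_eq_norm, Prod.dist_eq]
    refine max_le ?_ (Real.dist_le_of_mem_uIcc ht hw.2)
    simpa using Real.dist_le_of_mem_Icc (left_mem_Icc.2 (by simp)) hw.1
  have hmain := enorm_sub_rpow_mul_volume_le_gagDensity hp hθ hf
    (measurableSet_Icc.prod measurableSet_uIcc) hQ
    (fun w => hdist left_mem_uIcc) (fun w => hdist right_mem_uIcc)
  have hsplit : ENNReal.ofReal (dist a b ^ (2 + θ * p)) =
      edist a b ^ (θ * p) * edist a b ^ (2 : ℝ) := by
    rw [← ENNReal.ofReal_rpow_of_nonneg dist_nonneg (by positivity), ← edist_dist, add_comm,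
      ENNReal.rpow_add _ _ hab0 (edist_ne_top a b)]
  rw [hvol, hsplit] at hmain
  rw [← ENNReal.mul_le_mul_iff_left (c := edist a b ^ (2 : ℝ))
    (ENNReal.rpow_pos (edist_pos.2 hab) (edist_ne_top a b)).ne' (by finiteness)]
  exact hmain.trans_eq (by ring)

lemma isHajlaszGradient_gagDensity_slice (hp : 1 ≤ p) (hθ : 0 ≤ θ) (hf : Continuous f) (x : ℝ) :
    IsHajlaszGradient θ (Icc (-1 : ℝ) 1) (fun y => f (x, y))
      (fun y => 2 * gagDensity θ p channel f (x, y) ^ (1 / p)) := by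
  intro a ha b hb
  rcases eq_or_ne a b with rfl | hab
  · simp only [edist_self, zero_le]
  have hp0 : 0 < p := one_pos.trans_le hp
  set G := fun y => gagDensity θ p channel f (x, y)
  calc edist (f (x, a)) (f (x, b))
      ≤ (2 ^ p * edist a b ^ (θ * p) * (G a + G b)) ^ (1 / p) := by
        rw [edist_eq_enorm_sub, one_div, ENNReal.le_rpow_inv_iff hp0]
        exact enorm_sub_rpow_le_gagDensity_slice hp hθ hf x ha hb hab
    _ = 2 * edist a b ^ θ * (G a + G b) ^ (1 / p) := by
        rw [ENNReal.mul_rpow_of_nonneg _ _ (by positivity),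
          ENNReal.mul_rpow_of_nonneg _ _ (by positivity), ← ENNReal.rpow_mul, ← ENNReal.rpow_mul,
          mul_assoc θ, mul_one_div_cancel hp0.ne', ENNReal.rpow_one, mul_one]
    _ ≤ 2 * edist a b ^ θ * (G a ^ (1 / p) + G b ^ (1 / p)) := by
        gcongr
        exact ENNReal.rpow_add_le_add_rpow _ _ (by positivity) ((div_le_one hp0).2 hp)
    _ = edist a b ^ θ * (2 * G a ^ (1 / p) + 2 * G b ^ (1 / p)) := by ring

lemma enorm_sub_le_gagDensity_slice (hp : 1 ≤ p) (hθ : 1 / p < θ) (hf : Continuous f) (x : ℝ)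
    {c d : ℝ} (hc : c ∈ Icc (-1 : ℝ) 1) (hd : d ∈ Icc (-1 : ℝ) 1) :
    ‖f (x, d) - f (x, c)‖ₑ ≤ 2 * morreyConst (θ - 1 / p) *
      ENNReal.ofReal (|d - c| ^ (θ - 1 / p)) *
        (∫⁻ y in Icc (-1 : ℝ) 1, gagDensity θ p channel f (x, y)) ^ (1 / p) := by
  have hp0 : 0 < p := one_pos.trans_le hp
  have hG : Measurable fun y => gagDensity θ p channel f (x, y) :=
    (measurable_gagDensity θ p channel hf).comp measurable_prodMk_left
  have hcong (y) : (2 * gagDensity θ p channel f (x, y) ^ (1 / p)) ^ p =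
      2 ^ p * gagDensity θ p channel f (x, y) := by
    rw [ENNReal.mul_rpow_of_nonneg _ _ hp0.le, ← ENNReal.rpow_mul, one_div_mul_cancel hp0.ne',
      ENNReal.rpow_one]
  have hmorrey := (isHajlaszGradient_gagDensity_slice hp (le_trans (by positivity) hθ.le)
    hf x).edist_le_morreyConst_mul hp hθ (by fun_prop)
      ((hG.pow_const _).const_mul 2).aemeasurable (uIcc_subset_Icc hd hc)
  simp only [hcong] at hmorrey
  rw [lintegral_const_mul _ hG, ENNReal.mul_rpow_of_nonneg _ _ (by positivity),
    ← ENNReal.rpow_mul, mul_one_div_cancel hp0.ne', ENNReal.rpow_one, edist_eq_enorm_sub,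
    edist_dist, ENNReal.ofReal_rpow_of_nonneg dist_nonneg (sub_nonneg.2 hθ.le),
    Real.dist_eq] at hmorrey
  exact hmorrey.trans_eq (by ring)

end Gagliardo

section SliceHolder

variable {φ : ℝ × ℝ → ℝ} {p : ℝ}

lemma deriv_snd_eq_iteratedFDeriv_one (hφ : Differentiable ℝ φ) (x y : ℝ) :
    deriv (fun t => φ (x, t)) y = iteratedFDeriv ℝ 1 φ (x, y) fun _ => (0, 1) := by
  rw [iteratedFDeriv_one_apply]
  exact ((hφ (x, y)).hasFDerivAt.comp_hasDerivAt y (hasDerivAt_prodMk_right x y)).deriv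

lemma enorm_apply_snd_le {n : ℕ} (T : ContinuousMultilinearMap ℝ (fun _ : Fin n => ℝ × ℝ) ℝ) :
    ‖T fun _ => (0, 1)‖ₑ ≤ ‖T‖ₑ := by
  rw [enorm_le_iff_norm_le]
  simpa [Prod.norm_def] using T.le_opNorm fun _ => ((0, 1) : ℝ × ℝ)

lemma hasDerivAt_deriv_snd (hφ : ContDiff ℝ 2 φ) (x y : ℝ) :
    HasDerivAt (deriv fun t => φ (x, t)) (iteratedFDeriv ℝ 2 φ (x, y) fun _ => (0, 1)) y := by
  have hd : Differentiable ℝ (iteratedFDeriv ℝ 1 φ) :=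
    hφ.differentiable_iteratedFDeriv (by norm_num)
  have hslice := (hd (x, y)).hasFDerivAt.comp_hasDerivAt y (hasDerivAt_prodMk_right x y)
  have happly := (ContinuousMultilinearMap.apply ℝ (fun _ : Fin 1 => ℝ × ℝ) ℝ
    fun _ => (0, 1)).hasFDerivAt.comp_hasDerivAt y hslice
  rw [funext (deriv_snd_eq_iteratedFDeriv_one (hφ.differentiable two_ne_zero) x),
    iteratedFDeriv_succ_apply_left]
  exact happly

lemma lintegral_rpow_one_div_rpow_slice (hp : 0 < p) {F : ℝ × ℝ → ℝ≥0∞} (hF : Measurable F) :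
    ∫⁻ x, ((∫⁻ y in Icc (-1 : ℝ) 1, F (x, y)) ^ (1 / p)) ^ p = ∫⁻ z in channel, F z := by
  simp_rw [lintegral_channel hF, ← ENNReal.rpow_mul, one_div_mul_cancel hp.ne', ENNReal.rpow_one]

lemma eLpNorm_iteratedFDeriv_le_sob2 (s p : ℝ) (S : Set (ℝ × ℝ)) (φ : ℝ × ℝ → ℝ) {j : ℕ}
    (hj : j ≤ ⌊s⌋₊) :
    eLpNorm (fun z => ‖iteratedFDeriv ℝ j φ z‖) (ENNReal.ofReal p) (volume.restrict S) ≤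
      sob2 s p S φ :=
  (Finset.single_le_sum (f := fun j => eLpNorm (fun z => ‖iteratedFDeriv ℝ j φ z‖)
    (ENNReal.ofReal p) (volume.restrict S)) (fun _ _ => zero_le)
    (Finset.mem_range_succ_iff.2 hj)).trans le_self_add

/-- The slices of `∂_y φ` are uniformly `α`-Hölder on `[-1,1]`, with a constant `L * H x` whose
factor `H` has `L^p` norm at most `M`. -/
def HasHolderSlices (α p : ℝ) (L M : ℝ≥0∞) (φ : ℝ × ℝ → ℝ) : Prop :=
  ∃ H : ℝ → ℝ≥0∞, Measurable H ∧ (∫⁻ x, H x ^ p) ^ (1 / p) ≤ M ∧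
    ∀ x : ℝ, ∀ c ∈ Icc (-1 : ℝ) 1, ∀ d ∈ Icc (-1 : ℝ) 1,
      ‖deriv (fun t => φ (x, t)) d - deriv (fun t => φ (x, t)) c‖ₑ ≤
        L * ENNReal.ofReal (|d - c| ^ α) * H x

lemma HasHolderSlices.mono {α : ℝ} {L M M' : ℝ≥0∞} (h : HasHolderSlices α p L M φ) (hM : M ≤ M') :
    HasHolderSlices α p L M' φ :=
  let ⟨H, hHm, hHle, hH⟩ := h
  ⟨H, hHm, hHle.trans hM, hH⟩

lemma hasHolderSlices_eLpNorm (hp : 1 < p) (hφ : ContDiff ℝ 2 φ) :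
    HasHolderSlices (1 - 1 / p) p 1 (eLpNorm (fun z => ‖iteratedFDeriv ℝ 2 φ z‖)
      (ENNReal.ofReal p) (volume.restrict channel)) φ := by
  have hp0 : 0 < p := one_pos.trans hp
  have hm : Measurable fun z => ‖iteratedFDeriv ℝ 2 φ z‖ₑ ^ p :=
    (hφ.continuous_iteratedFDeriv le_rfl).enorm.measurable.pow_const p
  refine ⟨fun x => (∫⁻ y in Icc (-1 : ℝ) 1, ‖iteratedFDeriv ℝ 2 φ (x, y)‖ₑ ^ p) ^ (1 / p),
    hm.lintegral_prod_right'.pow_const _, ?_, fun x c hc d hd => ?_⟩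
  · rw [lintegral_rpow_one_div_rpow_slice hp0 hm, eLpNorm_norm,
      eLpNorm_eq_lintegral_rpow_enorm_toReal (by simpa using hp0) ENNReal.ofReal_ne_top,
      ENNReal.toReal_ofReal hp0.le]
  · have hder := hasDerivAt_deriv_snd hφ x
    rw [one_mul]
    refine (enorm_sub_le_rpow_mul_lintegral_enorm_deriv
      (fun y => (hder y).differentiableAt) hp c d).trans ?_
    beta_reduce
    gcongr with y
    · exact uIcc_subset_Icc hc hd
    · rw [(hder y).deriv]
      exact enorm_apply_snd_le _

lemma hasHolderSlices_gag2 {θ : ℝ} (hp : 1 ≤ p) (hθ : 1 / p < θ) (hφ : ContDiff ℝ 1 φ) :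
    HasHolderSlices (θ - 1 / p) p (2 * morreyConst (θ - 1 / p)) (gag2 θ p channel φ 1) φ := by
  have hcont : Continuous (iteratedFDeriv ℝ 1 φ) := hφ.continuous_iteratedFDeriv le_rfl
  have hm := measurable_gagDensity θ p channel hcont
  refine ⟨fun x => (∫⁻ y in Icc (-1 : ℝ) 1,
      gagDensity θ p channel (iteratedFDeriv ℝ 1 φ) (x, y)) ^ (1 / p),
    hm.lintegral_prod_right'.pow_const _, ?_, fun x c hc d hd => ?_⟩
  · rw [lintegral_rpow_one_div_rpow_slice (one_pos.trans_le hp) hm]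
    rfl
  · simp_rw [deriv_snd_eq_iteratedFDeriv_one (hφ.differentiable one_ne_zero)]
    exact (enorm_apply_snd_le (iteratedFDeriv ℝ 1 φ (x, d) - iteratedFDeriv ℝ 1 φ (x, c))).trans
      (enorm_sub_le_gagDensity_slice hp hθ hcont x hc hd)

lemma exists_hasHolderSlices_sob2 {s : ℝ} (hp : 1 < p) (hs : 1 + 1 / p < s) :
    ∃ α : ℝ, 0 < α ∧ ∃ L : ℝ≥0∞, L ≠ ⊤ ∧ ∀ φ : ℝ × ℝ → ℝ, ContDiff ℝ (⌊s⌋₊ : ℕ) φ →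
      HasHolderSlices α p L (sob2 s p channel φ) φ := by
  have hp0 : 0 < p := one_pos.trans hp
  rcases le_or_gt 2 s with h2 | h2
  · have hfloor : 2 ≤ ⌊s⌋₊ := Nat.le_floor h2
    refine ⟨1 - 1 / p, sub_pos.2 ((div_lt_one hp0).2 hp), 1, one_ne_top, fun φ hφ => ?_⟩
    exact (hasHolderSlices_eLpNorm hp (hφ.of_le (by exact_mod_cast hfloor))).mono
      (eLpNorm_iteratedFDeriv_le_sob2 s p channel φ hfloor)
  · have hs1 : 1 < s := (lt_add_of_pos_right 1 (by positivity)).trans hs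
    have hfloor : ⌊s⌋₊ = 1 := (Nat.floor_eq_iff (by linarith)).2
      ⟨by exact_mod_cast hs1.le, by push_cast; linarith⟩
    have hθ : 1 / p < s - 1 := lt_sub_iff_add_lt'.2 hs
    refine ⟨s - 1 - 1 / p, sub_pos.2 hθ, 2 * morreyConst (s - 1 - 1 / p),
      ENNReal.mul_ne_top ofNat_ne_top (morreyConst_ne_top (sub_pos.2 hθ)), fun φ hφ => ?_⟩
    rw [hfloor] at hφ
    refine (hasHolderSlices_gag2 hp.le hθ hφ).mono ?_
    rw [sob2, hfloor, Nat.cast_one, if_neg hs1.ne']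
    exact le_add_self

end SliceHolder

section CriticalLayer

lemma ofReal_sq_mul_abs_div_abs_sub_le {α : ℝ} {L : ℝ≥0∞} {g : ℝ → ℝ} {y y₀ : ℝ}
    (hg : ‖g y - g y₀‖ₑ ≤ ENNReal.ofReal (|y - y₀| ^ α) * L) (h0 : g y₀ = 0) (w : ℝ) :
    ENNReal.ofReal (w ^ 2 * |g y| / |y - y₀|) ≤
      L * (‖w‖ₑ ^ 2 * ENNReal.ofReal (|y - y₀| ^ (α - 1))) := by
  rcases eq_or_ne y y₀ with rfl | hy
  · simp [h0]
  have hd : 0 < |y - y₀| := abs_pos.2 (sub_ne_zero.2 hy)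
  rw [h0, sub_zero] at hg
  calc ENNReal.ofReal (w ^ 2 * |g y| / |y - y₀|)
      = ‖w‖ₑ ^ 2 * ‖g y‖ₑ * ENNReal.ofReal |y - y₀|⁻¹ := by
        rw [div_eq_mul_inv, ENNReal.ofReal_mul (by positivity), ENNReal.ofReal_mul (by positivity),
          ← sq_abs, ENNReal.ofReal_pow (abs_nonneg _), Real.enorm_eq_ofReal_abs,
          Real.enorm_eq_ofReal_abs]
    _ ≤ ‖w‖ₑ ^ 2 * (ENNReal.ofReal (|y - y₀| ^ α) * L) * ENNReal.ofReal |y - y₀|⁻¹ := by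
        gcongr
    _ = L * (‖w‖ₑ ^ 2 * (ENNReal.ofReal (|y - y₀| ^ α) * ENNReal.ofReal |y - y₀|⁻¹)) := by ring
    _ = L * (‖w‖ₑ ^ 2 * ENNReal.ofReal (|y - y₀| ^ (α - 1))) := by
        rw [← ENNReal.ofReal_mul (by positivity), Real.rpow_sub_one hd.ne', div_eq_mul_inv]

lemma exists_setLIntegral_ofReal_weighted_le {α : ℝ} (hα : 0 < α) :
    ∃ m : ℕ, m ≠ 0 ∧ ∃ W : ℝ≥0∞, W ≠ ⊤ ∧ ∀ v : ℝ × ℝ → ℝ, Continuous v →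
      ∀ (x : ℝ) (g : ℝ → ℝ) (L : ℝ≥0∞), ∀ y₀ ∈ Icc (-1 : ℝ) 1, g y₀ = 0 →
        (∀ y ∈ Icc (-1 : ℝ) 1, ‖g y - g y₀‖ₑ ≤ ENNReal.ofReal (|y - y₀| ^ α) * L) →
        ∫⁻ y in Icc (-1 : ℝ) 1, ENNReal.ofReal (v (x, y) ^ 2 * |g y| / |y - y₀|) ≤
          L * (W * sliceNormSq m v x) := by
  obtain ⟨m, hm⟩ := exists_nat_gt (max 1 (1 / α))
  have hm1 : 1 < (m : ℝ) := (le_max_left _ _).trans_lt hm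
  have hαm : 1 < α * m := by
    rw [← div_lt_iff₀' hα]
    exact (le_max_right _ _).trans_lt hm
  have hexp : -1 < (α - 1) * (m : ℝ).conjExponent := by
    rw [Real.conjExponent, mul_div_assoc', lt_div_iff₀ (sub_pos.2 hm1)]
    linarith
  obtain ⟨W, hW, hWle⟩ := exists_setLIntegral_mul_abs_sub_rpow_le (-1) 1
    (Real.HolderConjugate.conjExponent hm1) hexp
  refine ⟨m, (Nat.cast_pos.1 (one_pos.trans hm1)).ne', W, hW, fun v hv x g L y₀ hy₀ h0 hg => ?_⟩
  have hvx : Measurable fun y => ‖v (x, y)‖ₑ ^ 2 :=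
    (hv.measurable.comp measurable_prodMk_left).enorm.pow_const 2
  calc ∫⁻ y in Icc (-1 : ℝ) 1, ENNReal.ofReal (v (x, y) ^ 2 * |g y| / |y - y₀|)
      ≤ ∫⁻ y in Icc (-1 : ℝ) 1, L * (‖v (x, y)‖ₑ ^ 2 * ENNReal.ofReal (|y - y₀| ^ (α - 1))) :=
        setLIntegral_mono' measurableSet_Icc fun y hy =>
          ofReal_sq_mul_abs_div_abs_sub_le (hg y hy) h0 _
    _ = L * ∫⁻ y in Icc (-1 : ℝ) 1, ‖v (x, y)‖ₑ ^ 2 * ENNReal.ofReal (|y - y₀| ^ (α - 1)) :=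
        lintegral_const_mul _ (hvx.mul (by fun_prop))
    _ ≤ L * (W * sliceNormSq m v x) := by
        gcongr
        exact hWle _ hvx.aemeasurable y₀ hy₀

lemma lintegral_mul_sliceNormSq_le {m : ℕ} (hm : m ≠ 0) {p : ℝ} (hp : 1 < p)
    {v : ℝ × ℝ → ℝ} (hv : Differentiable ℝ v) {H : ℝ → ℝ≥0∞} (hH : AEMeasurable H) :
    ∫⁻ x, H x * sliceNormSq m v x ≤
      (∫⁻ x, H x ^ p) ^ (1 / p) * (4 * (2 * m).factorial * h1Norm v ^ 2) := by
  have hfact : (1 : ℝ≥0∞) ≤ (2 * m).factorial := mod_cast (2 * m).factorial_pos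
  refine lintegral_mul_le_of_le_of_lintegral_le (Real.HolderConjugate.conjExponent hp) hH
    (measurable_sliceNormSq hv.continuous).aemeasurable (fun x => ?_) ?_
  · refine (sliceNormSq_le hv hm x).trans ?_
    gcongr
    exact le_mul_of_one_le_left' (by norm_num)
  · refine (lintegral_sliceNormSq_le hv hm).trans ?_
    gcongr
    exact le_mul_of_one_le_right' hfact

end CriticalLayer

theorem stmt11_general (s p : ℝ) (hp : 1 < p) (hs : 1 + 1 / p < s) :
    ∃ C : ℝ≥0∞, C ≠ ⊤ ∧
      ∀ (φ : ℝ × ℝ → ℝ), ContDiff ℝ (⌊s⌋₊ : ℕ) φ →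
      ∀ (ystar : ℝ → ℝ) (B : Set ℝ), (∀ x, ystar x ∈ Set.Icc (-1 : ℝ) 1) →
        (∀ᵐ x ∂(volume.restrict B), deriv (fun t => φ (x, t)) (ystar x) = 0) →
        ∀ v : ℝ × ℝ → ℝ, Differentiable ℝ v →
          (∫⁻ x in B, ∫⁻ y in Set.Icc (-1 : ℝ) 1,
              ENNReal.ofReal (v (x, y) ^ 2 * |deriv (fun t => φ (x, t)) y| / |y - ystar x|))
            ≤ C * sob2 s p channel φ * h1Norm v ^ 2 := by
  obtain ⟨α, hα, L, hL, hHolder⟩ := exists_hasHolderSlices_sob2 hp hs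
  obtain ⟨m, hm, W, hW, hslice⟩ := exists_setLIntegral_ofReal_weighted_le hα
  refine ⟨L * W * (4 * (2 * m).factorial), by finiteness, fun φ hφ ystar B hy hcrit v hv => ?_⟩
  obtain ⟨H, hHm, hHle, hH⟩ := hHolder φ hφ
  calc _ ≤ ∫⁻ x in B, L * W * (H x * sliceNormSq m v x) := by
        refine lintegral_mono_ae ?_
        filter_upwards [hcrit] with x hx
        refine (hslice v hv.continuous x _ (L * H x) (ystar x) (hy x) hx fun y hyI =>
          (hH x _ (hy x) y hyI).trans_eq (by ring)).trans_eq (by ring)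
    _ ≤ ∫⁻ x, L * W * (H x * sliceNormSq m v x) := setLIntegral_le_lintegral _ _
    _ = L * W * ∫⁻ x, H x * sliceNormSq m v x := lintegral_const_mul' _ _ (by finiteness)
    _ ≤ L * W * (sob2 s p channel φ * (4 * (2 * m).factorial * h1Norm v ^ 2)) := by
        gcongr
        exact (lintegral_mul_sliceNormSq_le hm hp hv hHm.aemeasurable).trans (by gcongr)
    _ = _ := by ring

/-- Weighted critical-layer estimate: for `s > 1 + 1/p`,
`φ ∈ W^{s,p}(Ω)`, a measurable `y_* : ℝ → [-1,1]` with `∂_y φ(x, y_*(x)) = 0` for a.e.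
`x ∈ B`, and any `v ∈ H¹(Ω)`, the weighted integral
`∫_B ∫_{-1}^1 |v|² |∂_y φ| / |y - y_*(x)| dy dx` is bounded by
`C ‖φ‖_{W^{s,p}(Ω)} ‖v‖²_{H¹(Ω)}`. -/
theorem stmt11 (s p : ℝ) (hp : 1 < p) (hs : 1 + 1 / p < s) :
    ∃ C : ℝ≥0∞, C ≠ ⊤ ∧
      ∀ (φ : ℝ × ℝ → ℝ), ContDiff ℝ (⌊s⌋₊ : ℕ) φ →
      ∀ (ystar : ℝ → ℝ) (B : Set ℝ), Measurable ystar → MeasurableSet B →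
        (∀ x, ystar x ∈ Set.Icc (-1 : ℝ) 1) →
        (∀ᵐ x ∂(volume.restrict B), deriv (fun t => φ (x, t)) (ystar x) = 0) →
        ∀ v : ℝ × ℝ → ℝ, Differentiable ℝ v →
          (∫⁻ x in B, ∫⁻ y in Set.Icc (-1 : ℝ) 1,
              ENNReal.ofReal (v (x, y) ^ 2 * |deriv (fun t => φ (x, t)) y| / |y - ystar x|))
            ≤ C * sob2 s p channel φ *
              (eLpNorm v 2 (volume.restrict channel)
                + eLpNorm (fun z => ‖fderiv ℝ v z‖) 2 (volume.restrict channel)) ^ 2 := by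
  obtain ⟨C, hC, hle⟩ := stmt11_general s p hp hs
  exact ⟨C, hC, fun φ hφ ystar B _ _ => hle φ hφ ystar B⟩
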